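/- arXiv:0805.0349 — 2 statements merged into one kernel-verified Lean document; each statement's English description precedes it below -/
import Mathlib

section
/- Let D ⊆ ℝ^ℓ be a bounded basic open semialgebraic set defined by integer-coefficient polynomial inequalities, contained in [0,r]^ℓ for a positive rational r. Then the Riemann-sum volume sequence n ↦ vol(V_n) is an elementary map ℕ → ℚ: there exist elementary functions a, b : ℕ → ℕ with vol(V_n) = a(n)/(b(n)+1) for all n ≥ 1. -/
/-- The class of elementary functions `ℕ^n → ℕ`: the smallest class containing the
zero function, successor, projections, addition, multiplication and truncated
subtraction, and closed under composition, bounded summation and bounded product. -/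
inductive Elem : ∀ {n : ℕ}, ((Fin n → ℕ) → ℕ) → Prop
  | zero {n : ℕ} : Elem (fun _ : Fin n → ℕ => 0)
  | succ : Elem (fun x : Fin 1 → ℕ => x 0 + 1)
  | proj {n : ℕ} (i : Fin n) : Elem (fun x : Fin n → ℕ => x i)
  | add : Elem (fun x : Fin 2 → ℕ => x 0 + x 1)
  | mul : Elem (fun x : Fin 2 → ℕ => x 0 * x 1)
  | tsub : Elem (fun x : Fin 2 → ℕ => x 0 - x 1)
  | comp {m n : ℕ} {f : (Fin m → ℕ) → ℕ} {g : Fin m → (Fin n → ℕ) → ℕ} :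
      Elem f → (∀ i, Elem (g i)) → Elem (fun x => f (fun i => g i x))
  | bsum {n : ℕ} {f : (Fin (n + 1) → ℕ) → ℕ} : Elem f →
      Elem (fun x : Fin (n + 1) → ℕ =>
        ∑ t ∈ Finset.range (x 0 + 1), f (Fin.cons t (fun i => x i.succ)))
  | bprod {n : ℕ} {f : (Fin (n + 1) → ℕ) → ℕ} : Elem f →
      Elem (fun x : Fin (n + 1) → ℕ =>
        ∏ t ∈ Finset.range (x 0 + 1), f (Fin.cons t (fun i => x i.succ)))

/-- A one-variable function `ℕ → ℕ` is elementary. -/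
def Elem1 (f : ℕ → ℕ) : Prop :=
  Elem (fun x : Fin 1 → ℕ => f (x 0))

/-- A (nonnegative) real number is elementary if it is approximated, with an
elementary modulus, by an elementary rational Cauchy sequence. -/
def ElemReal (α : ℝ) : Prop :=
  ∃ a b c : ℕ → ℕ, Elem1 a ∧ Elem1 b ∧ Elem1 c ∧
    ∀ k : ℕ, 1 ≤ k → ∀ x : ℕ, c k ≤ x →
      |(a x : ℝ) / ((b x : ℝ) + 1) - α| < 1 / (k : ℝ)

/-- The small cube `C_n(k) = Π_{i} [kᵢ·r/n, (kᵢ+1)·r/n] ⊆ ℝ^ℓ`. -/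
def smallCube (ℓ : ℕ) (r : ℚ) (n : ℕ) (k : Fin ℓ → ℕ) : Set (Fin ℓ → ℝ) :=
  Set.univ.pi fun i => Set.Icc ((k i : ℝ) * r / n) (((k i : ℝ) + 1) * r / n)

/-- `V_n`: the union of the small cubes `C_n(k)`, `k ∈ {0,…,n−1}^ℓ`, contained
in `D`. -/
def riemannUnion (ℓ : ℕ) (r : ℚ) (D : Set (Fin ℓ → ℝ)) (n : ℕ) :
    Set (Fin ℓ → ℝ) :=
  ⋃ k ∈ {k : Fin ℓ → ℕ | (∀ i, k i < n) ∧ smallCube ℓ r n k ⊆ D},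
    smallCube ℓ r n k


section LiftField
set_option linter.unusedSectionVars false
variable {R : Type*} [Field R] [LinearOrder R] [IsStrictOrderedRing R]

/-- `a` is infinitesimal with respect to the convex subring `O`. -/
def Infl (O : Subring R) (a : R) : Prop := ∀ u ∈ O, |a * u| < 1

theorem Infl.mul {O : Subring R} {a v : R} (h : Infl O a) (hv : v ∈ O) : Infl O (a * v) := by
  intro u hu
  rw [mul_assoc]
  exact h _ (O.mul_mem hv hu)

theorem Infl.add {O : Subring R} {a b : R} (ha : Infl O a) (hb : Infl O b) :
    Infl O (a + b) := by
  intro u hu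
  have h2 : (2 : R) ∈ O := by
    have := O.add_mem O.one_mem O.one_mem
    rwa [one_add_one_eq_two] at this
  have h1 := ha _ (O.mul_mem h2 hu)
  have h3 := hb _ (O.mul_mem h2 hu)
  rw [abs_lt] at *
  constructor <;> nlinarith

theorem Infl.neg {O : Subring R} {a : R} (ha : Infl O a) : Infl O (-a) := by
  intro u hu
  rw [neg_mul, abs_neg]
  exact ha u hu

theorem Infl.abs_le {O : Subring R} {a b : R} (ha : Infl O a) (h : |b| ≤ |a|) : Infl O b := by
  intro u hu
  refine lt_of_le_of_lt ?_ (ha u hu)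
  rw [abs_mul, abs_mul]
  gcongr

theorem Infl.zero (O : Subring R) : Infl O (0 : R) := by
  intro u _
  simp

theorem Infl.mem {O : Subring R} (hconv : ∀ a b : R, |a| ≤ |b| → b ∈ O → a ∈ O) {a : R}
    (ha : Infl O a) : a ∈ O := by
  have := ha 1 O.one_mem
  refine hconv a 1 ?_ O.one_mem
  rw [mul_one] at this
  simpa using this.le

theorem inv_mem_of_not_infl {O : Subring R} (hconv : ∀ a b : R, |a| ≤ |b| → b ∈ O → a ∈ O)
    {a : R} (ha : ¬ Infl O a) : a⁻¹ ∈ O := by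
  unfold Infl at ha
  push Not at ha
  obtain ⟨u, hu, h⟩ := ha
  refine hconv _ u ?_ hu
  have h0 : a ≠ 0 := by
    rintro rfl
    simp at h
    linarith
  rw [abs_inv, inv_le_iff_one_le_mul₀ (abs_pos.mpr h0), mul_comm, ← abs_mul]
  exact h

theorem Infl.eq_zero {O : Subring R} {F : Subfield R} (hF : F.toSubring ≤ O) {a : R}
    (haF : a ∈ F) (ha : Infl O a) : a = 0 := by
  by_contra h
  have := ha _ (hF (F.inv_mem haF))
  rw [mul_inv_cancel₀ h] at this
  simp at this

theorem aeval_mem_of_le {O : Subring R} {F : Subfield R} (hF : F.toSubring ≤ O) (p : Polynomial F)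
    {t : R} (ht : t ∈ O) : Polynomial.aeval t p ∈ O := by
  rw [Polynomial.aeval_eq_sum_range]
  refine O.sum_mem fun i _ => ?_
  rw [Algebra.smul_def]
  exact O.mul_mem (hF (p.coeff i).2) (O.pow_mem ht i)

theorem binom_mem {O : Subring R} {F : Subfield R} (hF : F.toSubring ≤ O) (p : Polynomial F)
    {t e : R} (ht : t ∈ O) (he : e ∈ O) : ∃ k ∈ O, Polynomial.aeval (t + e) p =
      Polynomial.aeval t p + Polynomial.aeval t (Polynomial.derivative p) * e + k * e ^ 2 := by
  let φ : F →+* O := Subring.inclusion hF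
  have key : ∀ (q : Polynomial F) (x : O), (((q.map φ).eval x : O) : R) = Polynomial.aeval (x : R) q := by
    intro q x
    rw [Polynomial.eval_map, ← Subring.coe_subtype, Polynomial.hom_eval₂]
    rfl
  obtain ⟨k, hk⟩ := Polynomial.binomExpansion (p.map φ) ⟨t, ht⟩ ⟨e, he⟩
  refine ⟨k, k.2, ?_⟩
  have := congrArg (Subtype.val) hk
  rw [Polynomial.derivative_map] at this
  push_cast at this
  rw [key, key, key] at this
  exact this

/-- Hensel-type root finding from the intermediate value property. -/
theorem exists_root_near {O : Subring R} (hconv : ∀ a b : R, |a| ≤ |b| → b ∈ O → a ∈ O)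
    (hivt : ∀ (p : Polynomial R) (a b : R), a ≤ b → p.eval a ≤ 0 → 0 ≤ p.eval b →
      ∃ s, a ≤ s ∧ s ≤ b ∧ p.eval s = 0)
    {F : Subfield R} (hF : F.toSubring ≤ O) (p : Polynomial F) {t : R} (ht : t ∈ O)
    (hp : Infl O (Polynomial.aeval t p))
    (hp' : ¬ Infl O (Polynomial.aeval t (Polynomial.derivative p))) :
    ∃ s, Infl O (s - t) ∧ Polynomial.aeval s p = 0 := by
  set c := Polynomial.aeval t p with hc
  set v := Polynomial.aeval t (Polynomial.derivative p) with hv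
  have hvinv : v⁻¹ ∈ O := inv_mem_of_not_infl hconv hp'
  have hv0 : v ≠ 0 := by
    intro h
    rw [h] at hp'
    exact hp' (Infl.zero O)
  have h2 : (2 : R) ∈ O := by
    have := O.add_mem O.one_mem O.one_mem
    rwa [one_add_one_eq_two] at this
  set w := c * v⁻¹ with hw
  have hwi : Infl O w := hp.mul hvinv
  set e := |w| * 2 with he
  have hei : Infl O e := by
    refine (Infl.mul ?_ h2)
    exact hwi.abs_le (by rw [abs_abs])
  have he0 : 0 ≤ e := by positivity
  have heO := hei.mem hconv
  have bound : ∀ k ∈ O, |k * e ^ 2 * v⁻¹| ≤ e / 2 := by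
    intro k hk
    have h1 := hei _ (O.mul_mem h2 (O.mul_mem hk hvinv))
    have h3 : k * e ^ 2 * v⁻¹ = e * (e * (2 * (k * v⁻¹))) / 2 := by ring
    rw [h3, abs_div, abs_mul, abs_of_nonneg he0, abs_two]
    have : e * |e * (2 * (k * v⁻¹))| ≤ e * 1 := by gcongr
    linarith
  obtain ⟨k₁, hk₁, h₁⟩ := binom_mem hF p ht heO
  obtain ⟨k₂, hk₂, h₂⟩ := binom_mem hF p ht (O.neg_mem heO)
  have b₁ := abs_le.mp (bound k₁ hk₁)
  have b₂ := abs_le.mp (bound k₂ hk₂)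
  have hwabs := abs_le.mp (le_refl |w|)
  let P : Polynomial R := p.map (algebraMap F R) * Polynomial.C v⁻¹
  have hP : ∀ x, P.eval x = Polynomial.aeval x p * v⁻¹ := by
    intro x
    simp [P, Polynomial.eval_map_algebraMap]
  obtain ⟨s, hs1, hs2, hs⟩ := hivt P (t + -e) (t + e) (by linarith)
    (by
      rw [hP, h₂]
      have : (c + v * -e + k₂ * (-e) ^ 2) * v⁻¹ = w - e + k₂ * e ^ 2 * v⁻¹ := by
        field_simp
        rw [hw]; field_simp; ring
      rw [this]
      linarith)
    (by
      rw [hP, h₁]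
      have : (c + v * e + k₁ * e ^ 2) * v⁻¹ = w + e + k₁ * e ^ 2 * v⁻¹ := by
        field_simp
        rw [hw]; field_simp
      rw [this]
      linarith)
  refine ⟨s, hei.abs_le ?_, ?_⟩
  · rw [abs_of_nonneg he0, abs_le]
    constructor <;> linarith
  · rw [hP] at hs
    exact (mul_eq_zero.mp hs).resolve_right (inv_ne_zero hv0)

theorem exists_lift_field {O : Subring R} (hconv : ∀ a b : R, |a| ≤ |b| → b ∈ O → a ∈ O)
    (hivt : ∀ (p : Polynomial R) (a b : R), a ≤ b → p.eval a ≤ 0 → 0 ≤ p.eval b →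
      ∃ s, a ≤ s ∧ s ≤ b ∧ p.eval s = 0)
    (F₀ : Subfield R) (hF₀ : F₀.toSubring ≤ O) :
    ∃ F : Subfield R, F₀ ≤ F ∧ F.toSubring ≤ O ∧ ∀ t ∈ O, ∃ s ∈ F, Infl O (s - t) := by
  obtain ⟨F, hF₀F, hmax⟩ := zorn_le_nonempty₀ {F : Subfield R | F.toSubring ≤ O}
    (by
      intro c hc hchain y hy
      refine ⟨sSup c, ?_, fun z hz => le_sSup hz⟩
      intro x hx
      have hx' : x ∈ sSup c := hx
      rw [Subfield.mem_sSup_of_directedOn ⟨y, hy⟩ hchain.directedOn] at hx'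
      obtain ⟨z, hz, hxz⟩ := hx'
      exact hc hz hxz) F₀ hF₀
  have hF : F.toSubring ≤ O := hmax.prop
  refine ⟨F, hF₀F, hF, fun t ht => ?_⟩
  -- adjoining
  have adj : ∀ s, (∀ x ∈ IntermediateField.adjoin F {s}, x ∈ O) → s ∈ F := by
    intro s hs
    have h1 : F ≤ (IntermediateField.adjoin F {s}).toSubfield := by
      intro x hx
      exact (IntermediateField.adjoin F {s}).algebraMap_mem ⟨x, hx⟩
    have h2 := hmax.le_of_ge (y := (IntermediateField.adjoin F {s}).toSubfield) hs h1
    exact h2 (IntermediateField.mem_adjoin_simple_self F s)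
  by_cases hall : ∀ p : Polynomial F, p ≠ 0 → ¬ Infl O (Polynomial.aeval t p)
  · refine ⟨t, adj t ?_, by rw [sub_self]; exact Infl.zero O⟩
    intro x hx
    obtain ⟨a, b, rfl⟩ := (IntermediateField.mem_adjoin_simple_iff F x).1 hx
    rw [div_eq_mul_inv]
    refine O.mul_mem (aeval_mem_of_le hF a ht) ?_
    by_cases hb : b = 0
    · simp [hb, O.zero_mem]
    · exact inv_mem_of_not_infl hconv (hall b hb)
  · push Not at hall
    obtain ⟨p, ⟨hp0, hp⟩, hmin⟩ := (measure (fun p : Polynomial F => p.natDegree)).wf.has_min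
      {p | p ≠ 0 ∧ Infl O (Polynomial.aeval t p)} hall
    have hdeg : 0 < p.natDegree := by
      by_contra h
      have h0 : p.natDegree = 0 := by omega
      rw [Polynomial.eq_C_of_natDegree_eq_zero h0, Polynomial.aeval_C] at hp
      have h1 := hp.eq_zero hF (p.coeff 0).2
      have h2 : p.coeff 0 = 0 := Subtype.ext h1
      apply hp0
      rw [Polynomial.eq_C_of_natDegree_eq_zero h0, h2, Polynomial.C_0]
    have hp' : ¬ Infl O (Polynomial.aeval t (Polynomial.derivative p)) := by
      intro h
      refine hmin (Polynomial.derivative p) ⟨?_, h⟩ (Polynomial.natDegree_derivative_lt hdeg.ne')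
      intro h0
      have := Polynomial.derivative_eq_zero.1 h0
      omega
    obtain ⟨s, hst, hs⟩ := exists_root_near hconv hivt hF p ht hp hp'
    refine ⟨s, adj s ?_, hst⟩
    have hsO : s ∈ O := by
      have := O.add_mem (hst.mem hconv) ht
      rwa [sub_add_cancel] at this
    intro x hx
    have halg : IsAlgebraic F s := ⟨p, hp0, hs⟩
    have hx' : x ∈ (IntermediateField.adjoin F {s}).toSubalgebra := hx
    rw [IntermediateField.adjoin_simple_toSubalgebra_of_isAlgebraic halg,
      Algebra.adjoin_singleton_eq_range_aeval] at hx'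
    obtain ⟨q, rfl⟩ := hx'
    exact aeval_mem_of_le hF q hsO

end LiftField

section Gap
open Filter

/-- Elements of growth bounded by a power of `N`. -/
def growthRing {R : Type*} [Field R] [LinearOrder R] [IsStrictOrderedRing R] (N : R)
    (hN : 2 ≤ N) : Subring R where
  carrier := {a | ∃ E : ℕ, |a| ≤ N ^ E}
  mul_mem' := by
    rintro a b ⟨E, hE⟩ ⟨E', hE'⟩
    refine ⟨E + E', ?_⟩
    rw [abs_mul, pow_add]
    gcongr
  one_mem' := ⟨0, by simp⟩
  add_mem' := by
    rintro a b ⟨E, hE⟩ ⟨E', hE'⟩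
    refine ⟨E + E' + 1, ?_⟩
    have h1 : (1 : R) ≤ N := by linarith
    have h2 : N ^ E ≤ N ^ (E + E') := pow_le_pow_right₀ h1 (by omega)
    have h3 : N ^ E' ≤ N ^ (E + E') := pow_le_pow_right₀ h1 (by omega)
    have h4 : 0 ≤ N ^ (E + E') := by positivity
    have h5 := abs_add_le a b
    rw [pow_succ]
    nlinarith
  zero_mem' := ⟨0, by simp⟩
  neg_mem' := by
    rintro a ⟨E, hE⟩
    exact ⟨E, by rwa [abs_neg]⟩

theorem growthRing_conv {R : Type*} [Field R] [LinearOrder R] [IsStrictOrderedRing R] (N : R)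
    (hN : 2 ≤ N) (a b : R) (hab : |a| ≤ |b|) (hb : b ∈ growthRing N hN) :
    a ∈ growthRing N hN := by
  obtain ⟨E, hE⟩ := hb
  exact ⟨E, hab.trans hE⟩

theorem infl_growth {R : Type*} [Field R] [LinearOrder R] [IsStrictOrderedRing R] (N : R)
    (hN : 2 ≤ N) (a : R) (h : ∀ E : ℕ, |a| * N ^ E < 1) : Infl (growthRing N hN) a := by
  rintro u ⟨E, hE⟩
  refine lt_of_le_of_lt ?_ (h E)
  rw [abs_mul]
  gcongr

theorem aeval_infl {R : Type*} [Field R] [LinearOrder R] [IsStrictOrderedRing R] (O : Subring R)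
    {ℓ : ℕ} (s t : Fin ℓ → R) (hs : ∀ i, s i ∈ O) (ht : ∀ i, t i ∈ O)
    (hst : ∀ i, Infl O (s i - t i)) (G : MvPolynomial (Fin ℓ) ℤ) :
    MvPolynomial.aeval s G ∈ O ∧ Infl O (MvPolynomial.aeval s G - MvPolynomial.aeval t G) := by
  induction G using MvPolynomial.induction_on with
  | C a =>
    simp only [MvPolynomial.aeval_C, sub_self]
    exact ⟨by simp, Infl.zero O⟩
  | add p q hp hq =>
    rw [map_add, map_add]
    refine ⟨O.add_mem hp.1 hq.1, ?_⟩
    have := hp.2.add hq.2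
    convert this using 1
    ring
  | mul_X p i hp =>
    rw [map_mul, map_mul, MvPolynomial.aeval_X, MvPolynomial.aeval_X]
    refine ⟨O.mul_mem hp.1 (hs i), ?_⟩
    have := (hp.2.mul (ht i)).add ((hst i).mul hp.1)
    convert this using 1
    ring

theorem aeval_mem_subfield {R : Type*} [Field R] (F : Subfield R)
    {ℓ : ℕ} (s : Fin ℓ → R) (hs : ∀ i, s i ∈ F) (G : MvPolynomial (Fin ℓ) ℤ) :
    MvPolynomial.aeval s G ∈ F := by
  induction G using MvPolynomial.induction_on with
  | C a => simp
  | add p q hp hq =>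
    rw [map_add]
    exact F.add_mem hp hq
  | mul_X p i hp =>
    rw [map_mul, MvPolynomial.aeval_X]
    exact F.mul_mem hp (hs i)

/-- The ultrapower of the reals. -/
abbrev UReal : Type := Germ (hyperfilter ℕ : Filter ℕ) ℝ

/-- The class of a sequence. -/
noncomputable abbrev useq : (ℕ → ℝ) →+* UReal := Germ.coeRingHom _

theorem useq_le (f g : ℕ → ℝ) : useq f ≤ useq g ↔ ∀ᶠ j in (hyperfilter ℕ : Filter ℕ), f j ≤ g j :=
  Germ.coe_le

theorem useq_lt (f g : ℕ → ℝ) : useq f < useq g ↔ ∀ᶠ j in (hyperfilter ℕ : Filter ℕ), f j < g j :=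
  Germ.coe_lt

theorem useq_eq (f g : ℕ → ℝ) : useq f = useq g ↔ ∀ᶠ j in (hyperfilter ℕ : Filter ℕ), f j = g j :=
  Germ.coe_eq

theorem useq_surj (a : UReal) : ∃ f, useq f = a := by
  induction a using Germ.inductionOn with
  | _ f => exact ⟨f, rfl⟩

theorem useq_abs (f : ℕ → ℝ) : |useq f| = useq (fun j => |f j|) :=
  Germ.abs_def _

theorem useq_aeval {ℓ : ℕ} (S : Fin ℓ → ℕ → ℝ) (G : MvPolynomial (Fin ℓ) ℤ) :
    MvPolynomial.aeval (fun i => useq (S i)) G =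
      useq (fun j => MvPolynomial.aeval (fun i => S i j) G) := by
  induction G using MvPolynomial.induction_on with
  | C a =>
    simp only [MvPolynomial.aeval_C]
    have : (fun _ : ℕ => (algebraMap ℤ ℝ) a) = ((a : ℤ) : ℕ → ℝ) := by
      ext; simp
    rw [this, map_intCast]
    simp
  | add p q hp hq =>
    simp only [map_add]
    rw [hp, hq, ← map_add]
    rfl
  | mul_X p i hp =>
    simp only [map_mul, MvPolynomial.aeval_X]
    rw [hp, ← map_mul]
    rfl

theorem useq_ivt (p : Polynomial UReal) (a b : UReal) (hab : a ≤ b) (ha : p.eval a ≤ 0)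
    (hb : 0 ≤ p.eval b) : ∃ s, a ≤ s ∧ s ≤ b ∧ p.eval s = 0 := by
  choose c hc using fun i => useq_surj (p.coeff i)
  obtain ⟨A, rfl⟩ := useq_surj a
  obtain ⟨B, rfl⟩ := useq_surj b
  have key : ∀ X : ℕ → ℝ, p.eval (useq X) =
      useq (fun j => ∑ i ∈ Finset.range (p.natDegree + 1), c i j * X j ^ i) := by
    intro X
    rw [Polynomial.eval_eq_sum_range]
    simp only [← hc]
    rw [show (fun j => ∑ i ∈ Finset.range (p.natDegree + 1), c i j * X j ^ i) =
      ∑ i ∈ Finset.range (p.natDegree + 1), c i * X ^ i by ext j; simp]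
    rw [map_sum]
    simp only [map_mul, map_pow]
  rw [key, ← map_zero useq, useq_le] at ha hb
  rw [useq_le] at hab
  have hex : ∀ j, ∃ s, (A j ≤ B j → (∑ i ∈ Finset.range (p.natDegree + 1), c i j * A j ^ i) ≤ 0 →
      0 ≤ (∑ i ∈ Finset.range (p.natDegree + 1), c i j * B j ^ i) →
      A j ≤ s ∧ s ≤ B j ∧ (∑ i ∈ Finset.range (p.natDegree + 1), c i j * s ^ i) = 0) := by
    intro j
    by_cases h : A j ≤ B j ∧ (∑ i ∈ Finset.range (p.natDegree + 1), c i j * A j ^ i) ≤ 0 ∧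
      0 ≤ (∑ i ∈ Finset.range (p.natDegree + 1), c i j * B j ^ i)
    · obtain ⟨h1, h2, h3⟩ := h
      have hcont : ContinuousOn
          (fun x : ℝ => ∑ i ∈ Finset.range (p.natDegree + 1), c i j * x ^ i)
          (Set.Icc (A j) (B j)) := by fun_prop
      obtain ⟨s, hs, hs0⟩ := intermediate_value_Icc h1 hcont ⟨h2, h3⟩
      exact ⟨s, fun _ _ _ => ⟨hs.1, hs.2, hs0⟩⟩
    · exact ⟨0, fun h1 h2 h3 => absurd ⟨h1, h2, h3⟩ h⟩
  choose S hS using hex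
  refine ⟨useq S, ?_, ?_, ?_⟩
  · rw [useq_le]
    filter_upwards [hab, ha, hb] with j h1 h2 h3 using (hS j h1 h2 h3).1
  · rw [useq_le]
    filter_upwards [hab, ha, hb] with j h1 h2 h3 using (hS j h1 h2 h3).2.1
  · rw [key, ← map_zero useq, useq_eq]
    filter_upwards [hab, ha, hb] with j h1 h2 h3 using (hS j h1 h2 h3).2.2

theorem gap (ℓ : ℕ) (r : ℚ) (hr : 0 < r) (G : MvPolynomial (Fin ℓ) ℤ) :
    ∃ E : ℕ, ∀ n : ℕ, 1 ≤ n → ∀ k : Fin ℓ → ℕ, (∀ i, k i < n) →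
      (∀ x ∈ smallCube ℓ r n k, 0 < MvPolynomial.aeval x G) →
      ∀ x ∈ smallCube ℓ r n k, (1 : ℝ) ≤ MvPolynomial.aeval x G * ((n : ℝ) + 1) ^ E := by
  by_contra hcon
  push Not at hcon
  choose n hn k hk hpos x hx hlt using hcon
  have hrR : (0 : ℝ) < (r : ℝ) := by exact_mod_cast hr
  have hn' : ∀ j, (1 : ℝ) ≤ n j := fun j => by exact_mod_cast hn j
  set N : UReal := useq (fun j => (n j : ℝ) + 1) with hNdef
  have hN : 2 ≤ N := by
    have : (2 : UReal) = useq (fun _ => 2) := rfl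
    rw [this, useq_le]
    exact Eventually.of_forall fun j => by linarith [hn' j]
  set O := growthRing N hN with hO
  have hconv := growthRing_conv N hN
  let ψ : (ℕ → ℤ) →+* UReal := useq.comp ((Int.castRingHom ℝ).compLeft ℕ)
  have hψ : ∀ u, ψ u = useq (fun j => (u j : ℝ)) := fun u => rfl
  let A : Subring UReal := ψ.range ⊓ O
  let F₀ := Subfield.closure (A : Set UReal)
  have hF₀ : F₀.toSubring ≤ O := by
    intro a ha
    obtain ⟨y, hy, z, hz, rfl⟩ := Subfield.mem_closure_iff.1 ha
    rw [Subring.closure_eq] at hy hz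
    rw [div_eq_mul_inv]
    refine O.mul_mem hy.2 ?_
    obtain ⟨u, hu⟩ := hz.1
    by_cases h0 : z = 0
    · simp [h0]
    refine hconv _ 1 ?_ O.one_mem
    rw [abs_inv, abs_one]
    apply inv_le_one_of_one_le₀
    rw [← hu, hψ, useq_abs, ← map_one useq, useq_le]
    have h1 : ∀ᶠ j in (hyperfilter ℕ : Filter ℕ), ¬ ((u j : ℝ) = 0) := by
      rw [Ultrafilter.eventually_not]
      intro h
      apply h0
      rw [← hu, hψ, ← map_zero useq, useq_eq]
      exact h
    filter_upwards [h1] with j hj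
    have : u j ≠ 0 := by exact_mod_cast hj
    have := Int.one_le_abs this
    simp only [Pi.one_apply]
    exact_mod_cast this
  obtain ⟨F, hF₀F, hF, hlift⟩ := exists_lift_field hconv useq_ivt F₀ hF₀
  -- natural number sequences bounded by n are in F
  have hnat : ∀ u : ℕ → ℕ, (∀ j, u j ≤ n j) → useq (fun j => (u j : ℝ)) ∈ F := by
    intro u hu
    apply hF₀F
    apply Subfield.subset_closure
    refine ⟨⟨fun j => (u j : ℤ), by rw [hψ]; simp⟩, 1, ?_⟩
    rw [pow_one, useq_abs, hNdef, useq_le]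
    refine Eventually.of_forall fun j => ?_
    have : (u j : ℝ) ≤ n j := by exact_mod_cast hu j
    simp only [Nat.abs_cast]
    linarith
  have hrF : useq (fun _ => (r : ℝ)) ∈ F := by
    have : useq (fun _ => (r : ℝ)) = (useq.comp (Pi.constRingHom ℕ ℝ)) (r : ℝ) := rfl
    rw [this, map_ratCast]
    exact SubfieldClass.ratCast_mem F r
  have hlo : ∀ i, useq (fun j => (k j i : ℝ) * r / n j) ∈ F := by
    intro i
    exact F.div_mem (F.mul_mem (hnat (fun j => k j i) (fun j => (hk j i).le)) hrF)
      (hnat n fun _ => le_rfl)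
  have hhi : ∀ i, useq (fun j => ((k j i : ℝ) + 1) * r / n j) ∈ F := by
    intro i
    exact F.div_mem (F.mul_mem (F.add_mem (hnat (fun j => k j i) (fun j => (hk j i).le))
      F.one_mem) hrF) (hnat n fun _ => le_rfl)
  set t : Fin ℓ → UReal := fun i => useq (fun j => x j i) with ht
  have hxlo : ∀ j i, (k j i : ℝ) * r / n j ≤ x j i := fun j i => (hx j i (Set.mem_univ i)).1
  have hxhi : ∀ j i, x j i ≤ ((k j i : ℝ) + 1) * r / n j := fun j i => (hx j i (Set.mem_univ i)).2
  have htlo : ∀ i, useq (fun j => (k j i : ℝ) * r / n j) ≤ t i := fun i => by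
    rw [ht, useq_le]
    exact Eventually.of_forall fun j => hxlo j i
  have hthi : ∀ i, t i ≤ useq (fun j => ((k j i : ℝ) + 1) * r / n j) := fun i => by
    rw [ht, useq_le]
    exact Eventually.of_forall fun j => hxhi j i
  have htO : ∀ i, t i ∈ O := by
    intro i
    refine hconv _ _ ?_ (hF (hhi i))
    have h0 : 0 ≤ t i := by
      refine le_trans ?_ (htlo i)
      rw [← map_zero useq, useq_le]
      refine Eventually.of_forall fun j => ?_
      simp only [Pi.zero_apply]
      positivity
    rw [abs_of_nonneg h0]
    exact (hthi i).trans (le_abs_self _)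
  choose s hsF hst using fun i => hlift (t i) (htO i)
  have hsO : ∀ i, s i ∈ O := fun i => hF (hsF i)
  have hslo : ∀ i, useq (fun j => (k j i : ℝ) * r / n j) ≤ s i := by
    intro i
    by_contra h
    push Not at h
    have h1 := (hst i).neg.abs_le (b := useq (fun j => (k j i : ℝ) * r / n j) - s i) (by
      have := htlo i
      rw [abs_of_nonneg (by linarith), abs_of_nonneg (by linarith)]
      linarith)
    have := h1.eq_zero hF (F.sub_mem (hlo i) (hsF i))
    linarith
  have hshi : ∀ i, s i ≤ useq (fun j => ((k j i : ℝ) + 1) * r / n j) := by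
    intro i
    by_contra h
    push Not at h
    have h1 := (hst i).abs_le (b := s i - useq (fun j => ((k j i : ℝ) + 1) * r / n j)) (by
      have := hthi i
      rw [abs_of_nonneg (by linarith), abs_of_nonneg (by linarith)]
      linarith)
    have := h1.eq_zero hF (F.sub_mem (hsF i) (hhi i))
    linarith
  have hGt : Infl O (MvPolynomial.aeval t G) := by
    apply infl_growth
    intro E
    rw [ht, useq_aeval, useq_abs, hNdef, ← map_pow, ← map_mul, ← map_one useq, useq_lt]
    have hge : ∀ᶠ j in (hyperfilter ℕ : Filter ℕ), E ≤ j := by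
      have := (eventually_ge_atTop E)
      rw [← Nat.cofinite_eq_atTop] at this
      exact hyperfilter_le_cofinite this
    filter_upwards [hge] with j hj
    simp only [Pi.mul_apply, Pi.pow_apply, Pi.one_apply]
    refine lt_of_le_of_lt ?_ (hlt j)
    have h0 := hpos j (x j) (hx j)
    rw [abs_of_pos h0]
    have h1 : ((n j : ℝ) + 1) ^ E ≤ ((n j : ℝ) + 1) ^ j :=
      pow_le_pow_right₀ (by linarith [hn' j]) hj
    gcongr
  have hGs : Infl O (MvPolynomial.aeval s G) := by
    have := (aeval_infl O s t hsO htO hst G).2.add hGt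
    rwa [sub_add_cancel] at this
  have hz := hGs.eq_zero hF (aeval_mem_subfield F s hsF G)
  choose S hS using fun i => useq_surj (s i)
  have hsS : s = fun i => useq (S i) := by
    ext i
    rw [hS]
  rw [hsS, useq_aeval, ← map_zero useq, useq_eq] at hz
  have e1 : ∀ᶠ j in (hyperfilter ℕ : Filter ℕ), ∀ i, (k j i : ℝ) * r / n j ≤ S i j := by
    rw [eventually_all]
    intro i
    have := hslo i
    rwa [← hS, useq_le] at this
  have e2 : ∀ᶠ j in (hyperfilter ℕ : Filter ℕ), ∀ i, S i j ≤ ((k j i : ℝ) + 1) * r / n j := by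
    rw [eventually_all]
    intro i
    have := hshi i
    rwa [← hS, useq_le] at this
  obtain ⟨j, h0, h1, h2⟩ := (hz.and (e1.and e2)).exists
  have := hpos j (fun i => S i j) (fun i _ => ⟨h1 i, h2 i⟩)
  simp only [Pi.zero_apply] at h0
  linarith

end Gap

section ElemTools

theorem Elem.add' {N : ℕ} {f g : (Fin N → ℕ) → ℕ} (hf : Elem f) (hg : Elem g) :
    Elem (fun z => f z + g z) :=
  Elem.comp (g := ![f, g]) Elem.add (by intro i; fin_cases i; exacts [hf, hg])

theorem Elem.mul' {N : ℕ} {f g : (Fin N → ℕ) → ℕ} (hf : Elem f) (hg : Elem g) :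
    Elem (fun z => f z * g z) :=
  Elem.comp (g := ![f, g]) Elem.mul (by intro i; fin_cases i; exacts [hf, hg])

theorem Elem.tsub' {N : ℕ} {f g : (Fin N → ℕ) → ℕ} (hf : Elem f) (hg : Elem g) :
    Elem (fun z => f z - g z) :=
  Elem.comp (g := ![f, g]) Elem.tsub (by intro i; fin_cases i; exacts [hf, hg])

theorem Elem.const {N : ℕ} (c : ℕ) : Elem (fun _ : Fin N → ℕ => c) := by
  induction c with
  | zero => exact Elem.zero
  | succ c ih => exact Elem.comp (g := fun _ : Fin 1 => fun _ : Fin N → ℕ => c) Elem.succ (fun _ => ih)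

theorem Elem.pow' {N : ℕ} {f : (Fin N → ℕ) → ℕ} (hf : Elem f) (d : ℕ) :
    Elem (fun z => f z ^ d) := by
  induction d with
  | zero => simpa using Elem.const 1
  | succ d ih =>
    simp only [pow_succ]
    exact ih.mul' hf

theorem Elem.prod' {N q : ℕ} {f : Fin q → (Fin N → ℕ) → ℕ} (hf : ∀ i, Elem (f i)) :
    Elem (fun z => ∏ i, f i z) := by
  induction q with
  | zero => simpa using Elem.const 1
  | succ q ih =>
    simp only [Fin.prod_univ_succ]
    exact (hf 0).mul' (ih fun i => hf i.succ)

theorem Elem.bsum' {N : ℕ} {b : (Fin N → ℕ) → ℕ} {f : (Fin N → ℕ) → ℕ → ℕ} (hb : Elem b)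
    (hf : Elem (fun w : Fin (N + 1) → ℕ => f (fun i => w i.succ) (w 0))) :
    Elem (fun z => ∑ t ∈ Finset.range (b z + 1), f z t) := by
  have := Elem.comp (g := (Fin.cons b (fun i z => z i) : Fin (N + 1) → (Fin N → ℕ) → ℕ))
    (Elem.bsum hf) (by
      intro i
      refine Fin.cases ?_ (fun j => ?_) i
      · exact hb
      · exact Elem.proj j)
  simpa using this

theorem sum_piFinset_succ {ℓ : ℕ} (s : Finset ℕ) (f : (Fin (ℓ + 1) → ℕ) → ℕ) :
    ∑ k ∈ Fintype.piFinset (fun _ : Fin (ℓ + 1) => s), f k =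
      ∑ t ∈ s, ∑ k ∈ Fintype.piFinset (fun _ : Fin ℓ => s), f (Fin.cons t k) := by
  rw [← Finset.sum_product']
  refine Finset.sum_bij' (fun k _ => (k 0, Fin.tail k)) (fun p _ => Fin.cons p.1 p.2) ?_ ?_ ?_ ?_ ?_
  · intro k hk
    simp only [Fintype.mem_piFinset, Finset.mem_product] at hk ⊢
    exact ⟨hk 0, fun i => hk i.succ⟩
  · intro p hp
    simp only [Fintype.mem_piFinset, Finset.mem_product] at hp ⊢
    intro i
    refine Fin.cases ?_ (fun j => ?_) i
    · simpa using hp.1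
    · simpa using hp.2 j
  · intro k _
    simp
  · intro p _
    simp
  · intro k _
    simp

/-- Elementary in a context and a further tuple of variables. -/
def CElem {N ℓ : ℕ} (f : (Fin N → ℕ) → (Fin ℓ → ℕ) → ℕ) : Prop :=
  ∀ (N' : ℕ) (c : Fin N → (Fin N' → ℕ) → ℕ) (u : Fin ℓ → (Fin N' → ℕ) → ℕ),
    (∀ i, Elem (c i)) → (∀ i, Elem (u i)) → Elem (fun z => f (fun i => c i z) (fun i => u i z))

theorem Elem.comp_ctx {N N' : ℕ} {b : (Fin N → ℕ) → ℕ} (hb : Elem b)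
    {c : Fin N → (Fin N' → ℕ) → ℕ} (hc : ∀ i, Elem (c i)) : Elem (fun z => b (fun i => c i z)) :=
  Elem.comp hb hc

theorem CElem.sum {ℓ : ℕ} : ∀ {N : ℕ} {f : (Fin N → ℕ) → (Fin ℓ → ℕ) → ℕ} {b : (Fin N → ℕ) → ℕ},
    CElem f → Elem b →
    Elem (fun z => ∑ k ∈ Fintype.piFinset (fun _ : Fin ℓ => Finset.range (b z + 1)), f z k) := by
  induction ℓ with
  | zero =>
    intro N f b hf hb
    have := hf N (fun i z => z i) (fun i => i.elim0) (fun i => Elem.proj i) (fun i => i.elim0)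
    convert this using 2 with z
    rw [Fintype.piFinset_of_isEmpty, Finset.univ_unique, Finset.sum_singleton]
    congr 1
    exact Subsingleton.elim _ _
  | succ ℓ ih =>
    intro N f b hf hb
    simp only [sum_piFinset_succ]
    refine Elem.bsum' (f := fun z t => ∑ k ∈ Fintype.piFinset
      (fun _ : Fin ℓ => Finset.range (b z + 1)), f z (Fin.cons t k)) hb ?_
    refine ih (N := N + 1) (f := fun w k => f (fun i => w i.succ) (Fin.cons (w 0) k))
      (b := fun w => b (fun i => w i.succ)) ?_ (hb.comp_ctx fun i => Elem.proj i.succ)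
    intro N' c u hc hu
    have := hf N' (fun i => c i.succ) (Fin.cons (c 0) u) (fun i => hc i.succ) (by
      intro i
      refine Fin.cases ?_ (fun j => ?_) i
      · exact hc 0
      · exact hu j)
    convert this using 3 with z
    ext i
    refine Fin.cases ?_ (fun j => ?_) i
    · simp
    · simp

/-- Elementary in one number and a tuple, in substitution-closed form. -/
def SElem {ℓ : ℕ} (f : ℕ → (Fin ℓ → ℕ) → ℕ) : Prop :=
  ∀ (N : ℕ) (a : (Fin N → ℕ) → ℕ) (u : Fin ℓ → (Fin N → ℕ) → ℕ),
    Elem a → (∀ i, Elem (u i)) → Elem (fun z => f (a z) (fun i => u i z))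

theorem exists_num (ℓ : ℕ) (G : MvPolynomial (Fin ℓ) ℤ) :
    ∃ (d : ℕ) (A B : ℕ → (Fin ℓ → ℕ) → ℕ), SElem A ∧ SElem B ∧ ∀ (w : ℕ), 0 < w → ∀ u : Fin ℓ → ℕ,
      MvPolynomial.aeval (fun i => (u i : ℝ) / w) G * (w : ℝ) ^ d = (A w u : ℝ) - B w u := by
  induction G using MvPolynomial.induction_on with
  | C a =>
    refine ⟨0, fun _ _ => a.toNat, fun _ _ => (-a).toNat, ?_, ?_, ?_⟩
    · intro N _ _ _ _
      exact Elem.const _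
    · intro N _ _ _ _
      exact Elem.const _
    · intro w _ u
      have h : (a : ℤ) = (a.toNat : ℤ) - ((-a).toNat : ℤ) := by omega
      have h2 : (a : ℝ) = (a.toNat : ℝ) - ((-a).toNat : ℝ) := by exact_mod_cast h
      simp only [MvPolynomial.aeval_C, pow_zero, mul_one]
      simpa using h2
  | add p q hp hq =>
    obtain ⟨d, A, B, hA, hB, h⟩ := hp
    obtain ⟨d', A', B', hA', hB', h'⟩ := hq
    refine ⟨d + d', fun w u => A w u * w ^ d' + A' w u * w ^ d,
      fun w u => B w u * w ^ d' + B' w u * w ^ d, ?_, ?_, ?_⟩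
    · intro N a u ha hu
      exact ((hA N a u ha hu).mul' (ha.pow' d')).add' ((hA' N a u ha hu).mul' (ha.pow' d))
    · intro N a u ha hu
      exact ((hB N a u ha hu).mul' (ha.pow' d')).add' ((hB' N a u ha hu).mul' (ha.pow' d))
    · intro w hw u
      have e := h w hw u
      have e' := h' w hw u
      push_cast
      rw [map_add]
      linear_combination (w : ℝ) ^ d' * e + (w : ℝ) ^ d * e'
  | mul_X p i hp =>
    obtain ⟨d, A, B, hA, hB, h⟩ := hp
    refine ⟨d + 1, fun w u => A w u * u i, fun w u => B w u * u i, ?_, ?_, ?_⟩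
    · intro N a u ha hu
      exact (hA N a u ha hu).mul' (hu i)
    · intro N a u ha hu
      exact (hB N a u ha hu).mul' (hu i)
    · intro w hw u
      have e := h w hw u
      have hw' : (w : ℝ) ≠ 0 := by positivity
      push_cast
      rw [map_mul, MvPolynomial.aeval_X, ← sub_mul, ← e, pow_succ]
      field_simp

theorem exists_lip (ℓ : ℕ) (r : ℝ) (hr : 0 ≤ r) (G : MvPolynomial (Fin ℓ) ℤ) :
    ∃ L : ℝ, 0 ≤ L ∧ ∀ x y : Fin ℓ → ℝ, (∀ i, |x i| ≤ r) → (∀ i, |y i| ≤ r) → ∀ ε : ℝ, 0 ≤ ε →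
      (∀ i, |x i - y i| ≤ ε) → |MvPolynomial.aeval x G| ≤ L ∧
        |MvPolynomial.aeval x G - MvPolynomial.aeval y G| ≤ L * ε := by
  induction G using MvPolynomial.induction_on with
  | C a =>
    refine ⟨|(a : ℝ)|, abs_nonneg _, fun x y _ _ ε hε _ => ?_⟩
    simp only [MvPolynomial.aeval_C, sub_self, abs_zero]
    exact ⟨by simp, by positivity⟩
  | add p q hp hq =>
    obtain ⟨L, hL, h⟩ := hp
    obtain ⟨L', hL', h'⟩ := hq
    refine ⟨L + L', by positivity, fun x y hx hy ε hε hxy => ?_⟩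
    obtain ⟨h1, h2⟩ := h x y hx hy ε hε hxy
    obtain ⟨h3, h4⟩ := h' x y hx hy ε hε hxy
    rw [map_add, map_add]
    rw [abs_le] at h1 h2 h3 h4
    refine ⟨abs_le.2 ?_, abs_le.2 ?_⟩ <;> constructor <;> linarith
  | mul_X p i hp =>
    obtain ⟨L, hL, h⟩ := hp
    refine ⟨L * r + L, by positivity, fun x y hx hy ε hε hxy => ?_⟩
    obtain ⟨h1, h2⟩ := h x y hx hy ε hε hxy
    rw [map_mul, map_mul, MvPolynomial.aeval_X, MvPolynomial.aeval_X]
    constructor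
    · rw [abs_mul]
      have : |MvPolynomial.aeval x p| * |x i| ≤ L * r := by gcongr; exact hx i
      linarith
    · have e : MvPolynomial.aeval x p * x i - MvPolynomial.aeval y p * y i =
        (MvPolynomial.aeval x p - MvPolynomial.aeval y p) * y i
          + MvPolynomial.aeval x p * (x i - y i) := by ring
      rw [e]
      refine (abs_add_le _ _).trans ?_
      rw [abs_mul, abs_mul]
      have a1 : |MvPolynomial.aeval x p - MvPolynomial.aeval y p| * |y i| ≤ L * ε * r := by
        gcongr; exact hy i
      have a2 : |MvPolynomial.aeval x p| * |x i - y i| ≤ L * ε := by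
        gcongr; exact hxy i
      linarith

end ElemTools

section Test

theorem exists_test (ℓ : ℕ) (r : ℚ) (hr : 0 < r) (G : MvPolynomial (Fin ℓ) ℤ) :
    ∃ T : ℕ → (Fin ℓ → ℕ) → ℕ, SElem T ∧ ∀ n : ℕ, 1 ≤ n → ∀ k : Fin ℓ → ℕ, (∀ i, k i < n) →
      (((∀ x ∈ smallCube ℓ r n k, 0 < MvPolynomial.aeval x G) → T n k = 1) ∧
      ((¬ ∀ x ∈ smallCube ℓ r n k, 0 < MvPolynomial.aeval x G) → T n k = 0)) := by
  obtain ⟨E, hE⟩ := gap ℓ r hr G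
  obtain ⟨d, A, B, hA, hB, hAB⟩ := exists_num ℓ G
  have hrR : (0 : ℝ) < (r : ℝ) := by exact_mod_cast hr
  obtain ⟨L, hL, hlip⟩ := exists_lip ℓ r hrR.le G
  obtain ⟨L', hL'⟩ := exists_nat_gt (L * r)
  have hL'0 : 0 < L' := by
    have : (0 : ℝ) < L' := lt_of_le_of_lt (by positivity) hL'
    exact_mod_cast this
  set p := r.num.toNat with hp
  have hpr : (r : ℝ) = (p : ℝ) / (r.den : ℝ) := by
    have h1 : ((p : ℤ) : ℝ) = (r.num : ℝ) := by
      congr 1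
      exact Int.toNat_of_nonneg (Rat.num_pos.mpr hr).le
    have h2 : ((p : ℤ) : ℝ) = (p : ℝ) := by push_cast; rfl
    rw [← h2, h1]
    exact Rat.cast_def r
  set s := r.den with hs
  have hs0 : 0 < s := r.den_pos
  let M : ℕ → ℕ := fun n => L' * (n + 1) ^ E
  have hM0 : ∀ n, 0 < M n := fun n => by positivity
  let W : ℕ → ℕ := fun n => n * M n * s
  let U : ℕ → (Fin ℓ → ℕ) → (Fin ℓ → ℕ) → (Fin ℓ → ℕ) := fun n k g i => (k i * M n + g i) * p
  let Q : ℕ → (Fin ℓ → ℕ) → (Fin ℓ → ℕ) → ℕ := fun n k g =>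
    (B (W n) (U n k g) * (n + 1) ^ E + W n ^ d) - A (W n) (U n k g) * (n + 1) ^ E
  let T : ℕ → (Fin ℓ → ℕ) → ℕ := fun n k =>
    1 - ∑ g ∈ Fintype.piFinset (fun _ : Fin ℓ => Finset.range (M n + 1)), Q n k g
  have hMe : ∀ {N : ℕ} {a : (Fin N → ℕ) → ℕ}, Elem a → Elem (fun z => M (a z)) := by
    intro N a ha
    exact (Elem.const L').mul' ((ha.add' (Elem.const 1)).pow' E)
  have hWe : ∀ {N : ℕ} {a : (Fin N → ℕ) → ℕ}, Elem a → Elem (fun z => W (a z)) := by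
    intro N a ha
    exact (ha.mul' (hMe ha)).mul' (Elem.const s)
  refine ⟨T, ?_, ?_⟩
  · intro N a u ha hu
    refine (Elem.const 1).tsub' ?_
    refine CElem.sum (f := fun z g => Q (a z) (fun i => u i z) g) (b := fun z => M (a z)) ?_ (hMe ha)
    intro N' c v hc hv
    have ha' := ha.comp_ctx hc
    have hu' := fun i => (hu i).comp_ctx hc
    have hW' := hWe ha'
    have hU' : ∀ i, Elem (fun z => U (a (fun i => c i z)) (fun j => u j (fun i => c i z))
        (fun j => v j z) i) := fun i =>
      (((hu' i).mul' (hMe ha')).add' (hv i)).mul' (Elem.const p)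
    have hn1 := (ha'.add' (Elem.const 1)).pow' E
    exact (((hB N' _ _ hW' hU').mul' hn1).add' (hW'.pow' d)).tsub' ((hA N' _ _ hW' hU').mul' hn1)
  · intro n hn k hk
    have hnR : (1 : ℝ) ≤ n := by exact_mod_cast hn
    have hnR0 : (0 : ℝ) < n := by linarith
    have hMR : (0 : ℝ) < M n := by exact_mod_cast hM0 n
    have hW0 : 0 < W n := by
      have := hM0 n
      positivity
    have hWR : (0 : ℝ) < W n := by exact_mod_cast hW0
    have hsR : (0 : ℝ) < s := by exact_mod_cast hs0
    let X : (Fin ℓ → ℕ) → (Fin ℓ → ℝ) := fun g i => ((k i : ℝ) + g i / M n) * r / n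
    have hX : ∀ g, X g = fun i => (U n k g i : ℝ) / (W n : ℝ) := by
      intro g
      ext i
      simp only [X, U, W]
      push_cast
      rw [hpr]
      field_simp
    have hQ : ∀ g, Q n k g = 0 ↔ (1 : ℝ) ≤ MvPolynomial.aeval (X g) G * ((n : ℝ) + 1) ^ E := by
      intro g
      have e := hAB (W n) hW0 (U n k g)
      rw [← hX] at e
      simp only [Q]
      rw [Nat.sub_eq_zero_iff_le]
      have hWd : (0 : ℝ) < (W n : ℝ) ^ d := by positivity
      constructor
      · intro h
        have h' : (B (W n) (U n k g) : ℝ) * ((n : ℝ) + 1) ^ E + (W n : ℝ) ^ d ≤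
          A (W n) (U n k g) * ((n : ℝ) + 1) ^ E := by exact_mod_cast h
        have : (W n : ℝ) ^ d * 1 ≤
            (W n : ℝ) ^ d * (MvPolynomial.aeval (X g) G * ((n : ℝ) + 1) ^ E) := by
          linear_combination h' - ((n : ℝ) + 1) ^ E * e
        exact le_of_mul_le_mul_left this hWd
      · intro h
        have : (W n : ℝ) ^ d * 1 ≤
            (W n : ℝ) ^ d * (MvPolynomial.aeval (X g) G * ((n : ℝ) + 1) ^ E) := by gcongr
        have h' : (B (W n) (U n k g) : ℝ) * ((n : ℝ) + 1) ^ E + (W n : ℝ) ^ d ≤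
          A (W n) (U n k g) * ((n : ℝ) + 1) ^ E := by
          linear_combination this + ((n : ℝ) + 1) ^ E * e
        exact_mod_cast h'
    have hcube : ∀ g : Fin ℓ → ℕ, (∀ i, g i ≤ M n) → X g ∈ smallCube ℓ r n k := by
      intro g hg i _
      have h1 : (g i : ℝ) / M n ≤ 1 := by
        rw [div_le_one hMR]
        exact_mod_cast hg i
      have h0 : 0 ≤ (g i : ℝ) / M n := by positivity
      constructor
      · simp only [X]
        gcongr
        linarith
      · simp only [X]
        gcongr
    have hball : ∀ x ∈ smallCube ℓ r n k, ∀ i, |x i| ≤ (r : ℝ) := by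
      intro x hx i
      have h1 := (hx i (Set.mem_univ i)).1
      have h2 := (hx i (Set.mem_univ i)).2
      have h3 : (0 : ℝ) ≤ (k i : ℝ) * r / n := by positivity
      have h4 : ((k i : ℝ) + 1) ≤ n := by exact_mod_cast hk i
      have h5 : ((k i : ℝ) + 1) * r / n ≤ r := by
        rw [div_le_iff₀ hnR0]
        nlinarith
      rw [abs_of_nonneg (by linarith)]
      linarith
    constructor
    · intro hpos
      have : ∑ g ∈ Fintype.piFinset (fun _ : Fin ℓ => Finset.range (M n + 1)), Q n k g = 0 := by
        refine Finset.sum_eq_zero fun g hg => ?_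
        rw [Fintype.mem_piFinset] at hg
        rw [hQ]
        refine hE n hn k hk hpos _ (hcube g fun i => ?_)
        have := hg i
        rw [Finset.mem_range] at this
        omega
      simp only [T, this]
    · intro hneg
      have : ∑ g ∈ Fintype.piFinset (fun _ : Fin ℓ => Finset.range (M n + 1)), Q n k g ≠ 0 := by
        intro h0
        apply hneg
        intro x hx
        rw [Finset.sum_eq_zero_iff] at h0
        let g : Fin ℓ → ℕ := fun i => ⌊(x i * n / r - k i) * M n⌋₊
        have hy : ∀ i, 0 ≤ (x i * n / r - k i) ∧ (x i * n / r - k i) ≤ 1 := by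
          intro i
          have h1 := (hx i (Set.mem_univ i)).1
          have h2 := (hx i (Set.mem_univ i)).2
          rw [div_le_iff₀ hnR0] at h1
          rw [le_div_iff₀ hnR0] at h2
          constructor
          · rw [sub_nonneg, le_div_iff₀ hrR]
            exact h1
          · rw [sub_le_iff_le_add', div_le_iff₀ hrR]
            exact h2
        have hgM : ∀ i, g i ≤ M n := by
          intro i
          refine Nat.floor_le_of_le ?_
          have := (hy i).2
          nlinarith
        have hgQ := (hQ g).1 (h0 g (by
          rw [Fintype.mem_piFinset]
          intro i
          rw [Finset.mem_range]
          have := hgM i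
          omega))
        have hdist : ∀ i, |X g i - x i| ≤ r / (n * M n) := by
          intro i
          have f1 : (g i : ℝ) ≤ (x i * n / r - k i) * M n :=
            Nat.floor_le (mul_nonneg (hy i).1 hMR.le)
          have f2 : (x i * n / r - k i) * M n < g i + 1 := Nat.lt_floor_add_one _
          have e : X g i - x i = (g i - (x i * n / r - k i) * M n) * (r / (n * M n)) := by
            simp only [X]
            field_simp
            ring
          rw [e, abs_mul, abs_of_pos (show (0 : ℝ) < r / (n * M n) by positivity)]
          have : |(g i : ℝ) - (x i * n / r - k i) * M n| ≤ 1 := by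
            rw [abs_le]
            constructor <;> linarith
          have h0 : (0 : ℝ) ≤ r / (n * M n) := by positivity
          nlinarith
        have hl := (hlip (X g) x (hball _ (hcube g hgM)) (hball x hx) _ (by positivity) hdist).2
        have hl' := (abs_le.mp hl).2
        have hP : (0 : ℝ) < ((n : ℝ) + 1) ^ E := by positivity
        have hlt : L * (r / (n * M n)) * ((n : ℝ) + 1) ^ E < 1 := by
          have hMn : (M n : ℝ) = L' * ((n : ℝ) + 1) ^ E := by simp [M]
          have hL'R : (0 : ℝ) < L' := by exact_mod_cast hL'0
          have : L * (r / (n * M n)) * ((n : ℝ) + 1) ^ E = L * r / (n * L') := by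
            rw [hMn]
            field_simp
          rw [this, div_lt_one (by positivity)]
          nlinarith
        by_contra hx0
        push Not at hx0
        have : MvPolynomial.aeval (X g) G * ((n : ℝ) + 1) ^ E ≤
            L * (r / (n * M n)) * ((n : ℝ) + 1) ^ E := by
          gcongr
          linarith
        linarith
      simp only [T]
      omega

end Test

section Volume
open MeasureTheory

theorem smallCube_eq (ℓ : ℕ) (r : ℚ) (n : ℕ) (k : Fin ℓ → ℕ) :
    smallCube ℓ r n k =
      Set.Icc (fun i => (k i : ℝ) * r / n) (fun i => ((k i : ℝ) + 1) * r / n) := by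
  rw [← Set.pi_univ_Icc]
  rfl

theorem volume_smallCube (ℓ : ℕ) (r : ℚ) (n : ℕ) (k : Fin ℓ → ℕ) :
    volume (smallCube ℓ r n k) = ENNReal.ofReal ((r : ℝ) / n) ^ ℓ := by
  rw [smallCube_eq, Real.volume_Icc_pi]
  have : ∀ i : Fin ℓ, ((k i : ℝ) + 1) * r / n - (k i : ℝ) * r / n = (r : ℝ) / n := by
    intro i
    ring
  simp [this]

theorem aedisjoint_smallCube (ℓ : ℕ) (r : ℚ) (hr : 0 < r) (n : ℕ) (k k' : Fin ℓ → ℕ)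
    (h : k ≠ k') : AEDisjoint volume (smallCube ℓ r n k) (smallCube ℓ r n k') := by
  obtain ⟨i, hi⟩ := Function.ne_iff.mp h
  have hrR : (0 : ℝ) < (r : ℝ) := by exact_mod_cast hr
  unfold AEDisjoint
  rw [smallCube_eq, smallCube_eq, Set.Icc_inter_Icc, Real.volume_Icc_pi]
  refine Finset.prod_eq_zero (Finset.mem_univ i) ?_
  rw [ENNReal.ofReal_eq_zero]
  simp only [Pi.inf_apply, Pi.sup_apply]
  rcases lt_or_gt_of_ne hi with h1 | h1
  · have h2 : ((k i : ℝ) + 1) * r / n ≤ (k' i : ℝ) * r / n := by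
      gcongr
      exact_mod_cast h1
    rw [sub_nonpos]
    exact inf_le_left.trans (h2.trans le_sup_right)
  · have h2 : ((k' i : ℝ) + 1) * r / n ≤ (k i : ℝ) * r / n := by
      gcongr
      exact_mod_cast h1
    rw [sub_nonpos]
    exact inf_le_right.trans (h2.trans le_sup_left)

open Classical in
theorem volume_riemannUnion (ℓ : ℕ) (r : ℚ) (hr : 0 < r) (D : Set (Fin ℓ → ℝ)) (n : ℕ) :
    (volume (riemannUnion ℓ r D n)).toReal =
      (((Fintype.piFinset (fun _ : Fin ℓ => Finset.range n)).filter
        (fun k => smallCube ℓ r n k ⊆ D)).card : ℝ) * ((r : ℝ) / n) ^ ℓ := by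
  have hrR : (0 : ℝ) < (r : ℝ) := by exact_mod_cast hr
  have h1 : riemannUnion ℓ r D n =
      ⋃ k ∈ (Fintype.piFinset (fun _ : Fin ℓ => Finset.range n)).filter
        (fun k => smallCube ℓ r n k ⊆ D), smallCube ℓ r n k := by
    unfold riemannUnion
    ext x
    simp
  rw [h1, measure_biUnion_finset₀]
  · simp only [volume_smallCube, Finset.sum_const, nsmul_eq_mul, ENNReal.toReal_mul,
      ENNReal.toReal_natCast, ENNReal.toReal_pow]
    rw [ENNReal.toReal_ofReal (by positivity)]
  · intro k _ k' _ hkk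
    exact aedisjoint_smallCube ℓ r hr n k k' hkk
  · intro k _
    rw [smallCube_eq]
    exact measurableSet_Icc.nullMeasurableSet

end Volume

/-- For a bounded basic open semialgebraic set
`D ⊆ [0,r]^ℓ` defined by integer-coefficient polynomials, the Riemann-sum
volume sequence `n ↦ vol(V_n)` is an elementary map `ℕ → ℚ`. -/
theorem riemannUnion_volume_elementary
    (ℓ q : ℕ) (r : ℚ) (hr : 0 < r)
    (G : Fin q → MvPolynomial (Fin ℓ) ℤ)
    (D : Set (Fin ℓ → ℝ))
    (hD : D = {x : Fin ℓ → ℝ | ∀ i, 0 < MvPolynomial.aeval x (G i)})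
    (hsub : D ⊆ Set.univ.pi fun _ => Set.Icc (0 : ℝ) (r : ℝ)) :
    ∃ a b : ℕ → ℕ, Elem1 a ∧ Elem1 b ∧
      ∀ n : ℕ, 1 ≤ n →
        (MeasureTheory.volume (riemannUnion ℓ r D n)).toReal
          = (a n : ℝ) / ((b n : ℝ) + 1) := by
  classical
  choose T hT hT1 using fun i => exists_test ℓ r hr (G i)
  set p := r.num.toNat with hp
  have hpr : (r : ℝ) = (p : ℝ) / (r.den : ℝ) := by
    have h1 : ((p : ℤ) : ℝ) = (r.num : ℝ) := by
      congr 1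
      exact Int.toNat_of_nonneg (Rat.num_pos.mpr hr).le
    have h2 : ((p : ℤ) : ℝ) = (p : ℝ) := by push_cast; rfl
    rw [← h2, h1]
    exact Rat.cast_def r
  have hs0 : 0 < r.den := r.den_pos
  have hsR : (0 : ℝ) < (r.den : ℝ) := by exact_mod_cast hs0
  have hn : Elem (fun x : Fin 1 → ℕ => x 0) := Elem.proj 0
  refine ⟨fun n => (∑ k ∈ Fintype.piFinset (fun _ : Fin ℓ => Finset.range (n - 1 + 1)),
    ∏ i, T i n k) * p ^ ℓ, fun n => (n * r.den) ^ ℓ - 1, ?_, ?_, ?_⟩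
  · refine Elem.mul' (CElem.sum (f := fun z k => ∏ i, T i (z 0) k) (b := fun z => z 0 - 1) ?_
      (hn.tsub' (Elem.const 1))) (Elem.const _)
    intro N c u hc hu
    exact Elem.prod' fun i => hT i N _ u (hc 0) hu
  · exact ((hn.mul' (Elem.const _)).pow' ℓ).tsub' (Elem.const 1)
  · intro n hn1
    have hnR : (0 : ℝ) < n := by exact_mod_cast hn1
    rw [volume_riemannUnion ℓ r hr D n]
    have hcount : ((Fintype.piFinset (fun _ : Fin ℓ => Finset.range n)).filter
        (fun k => smallCube ℓ r n k ⊆ D)).card =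
        ∑ k ∈ Fintype.piFinset (fun _ : Fin ℓ => Finset.range (n - 1 + 1)), ∏ i, T i n k := by
      rw [Nat.sub_add_cancel hn1, Finset.card_filter]
      refine Finset.sum_congr rfl fun k hk => ?_
      have hk' : ∀ i, k i < n := by
        intro i
        rw [Fintype.mem_piFinset] at hk
        exact Finset.mem_range.mp (hk i)
      split_ifs with h
      · symm
        refine Finset.prod_eq_one fun i _ => (hT1 i n hn1 k hk').1 fun x hx => ?_
        have := h hx
        rw [hD] at this
        exact this i
      · symm
        have : ∃ i, ¬ ∀ x ∈ smallCube ℓ r n k, 0 < MvPolynomial.aeval x (G i) := by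
          by_contra hcon
          push Not at hcon
          apply h
          intro x hx
          rw [hD]
          exact fun i => hcon i x hx
        obtain ⟨i, hi⟩ := this
        exact Finset.prod_eq_zero (Finset.mem_univ i) ((hT1 i n hn1 k hk').2 hi)
    rw [hcount]
    have hpos : 1 ≤ (n * r.den) ^ ℓ := Nat.one_le_pow _ _ (by positivity)
    rw [Nat.cast_sub hpos]
    push_cast
    rw [hpr, sub_add_cancel, div_div, div_pow, mul_comm (r.den : ℝ) (n : ℝ)]
    ring
end

section
/- Let D ⊆ ℝ^ℓ be a bounded basic open semialgebraic set defined by integer-coefficient polynomials, contained in [0,r]^ℓ for a positive rational r. Then there exists a constant L > 0, depending only on D, such that for all positive integers k and n with 4·r·L·√ℓ·k < n, one has |vol(D) − vol(V_n)| < 1/k. -/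
open MvPolynomial in
theorem ru_totalDegree_pderiv {N : ℕ} (P : MvPolynomial (Fin N) ℝ) (i : Fin N) (d : ℕ)
    (hP : P.totalDegree < d + 1) (h0 : pderiv i P ≠ 0) : (pderiv i P).totalDegree < d := by
  have key : ∀ m ∈ (pderiv i P).support, (m.sum fun _ e => e) < d := by
    intro m hm
    rw [mem_support_iff, coeff_pderiv] at hm
    have h1 : m + Finsupp.single i 1 ∈ P.support := by
      rw [mem_support_iff]
      exact left_ne_zero_of_mul hm
    have h2 := le_totalDegree h1
    rw [Finsupp.sum_add_index' (by simp) (by simp)] at h2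
    simp at h2
    omega
  obtain ⟨m, hm⟩ := (support_nonempty.2 h0)
  have hd : 0 < d := lt_of_le_of_lt (Nat.zero_le _) (key m hm)
  rw [totalDegree, Finset.sup_lt_iff (by simpa using hd)]
  exact key

/-- Restriction of a polynomial to a line. -/
noncomputable def ruLine {N : ℕ} (P : MvPolynomial (Fin N) ℝ) (a v : Fin N → ℝ) :
    Polynomial ℝ :=
  MvPolynomial.aeval (fun i => Polynomial.C (v i) * Polynomial.X + Polynomial.C (a i)) P

theorem ruLine_eval {N : ℕ} (P : MvPolynomial (Fin N) ℝ) (a v : Fin N → ℝ) (t : ℝ) :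
    (ruLine P a v).eval t = MvPolynomial.eval (fun i => a i + t * v i) P := by
  unfold ruLine
  induction P using MvPolynomial.induction_on with
  | C c => simp
  | add p q hp hq => simp [hp, hq]
  | mul_X p i hp => simp [hp]; left; ring

theorem ruLine_derivative {N : ℕ} (P : MvPolynomial (Fin N) ℝ) (a v : Fin N → ℝ) :
    Polynomial.derivative (ruLine P a v)
      = ∑ i, ruLine (MvPolynomial.pderiv i P) a v * Polynomial.C (v i) := by
  unfold ruLine
  induction P using MvPolynomial.induction_on with
  | C c => simp
  | add p q hp hq => simp [hp, hq, add_mul, Finset.sum_add_distrib]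
  | mul_X p i hp =>
    simp only [map_mul, Polynomial.derivative_mul, hp, MvPolynomial.aeval_X,
      MvPolynomial.pderiv_mul, map_add, add_mul, Finset.sum_add_distrib]
    congr 1
    · rw [← Finset.sum_congr rfl (g := fun j => _) (fun j _ => rfl)]
      simp only [Finset.sum_mul, Finset.mul_sum, mul_add, add_mul]
      rw [← Finset.sum_add_distrib]
      refine Finset.sum_congr rfl fun j _ => ?_
      ring
    · rw [Finset.sum_eq_single i]
      · simp
      · intro j _ hj
        rw [MvPolynomial.pderiv_X_of_ne (Ne.symm hj)]
        simp
      · simp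

theorem ruLine_natDegree {N : ℕ} (P : MvPolynomial (Fin N) ℝ) (a v : Fin N → ℝ) :
    (ruLine P a v).natDegree ≤ P.totalDegree := by
  have := MvPolynomial.aeval_natDegree_le (n := 1) P le_rfl
    (fun i => Polynomial.C (v i) * Polynomial.X + Polynomial.C (a i))
    (fun i => Polynomial.natDegree_linear_le)
  simpa [ruLine] using this

theorem ru_mono {N : ℕ} (P : MvPolynomial (Fin N) ℝ) (S : Set (Fin N → ℝ)) (hS : Convex ℝ S)
    (s : Fin N → ℝ)
    (hs : ∀ z ∈ S, ∀ i, 0 ≤ s i * MvPolynomial.eval z (MvPolynomial.pderiv i P))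
    (hs1 : ∀ i, s i * s i = 1)
    (x y : Fin N → ℝ) (hx : x ∈ S) (hy : y ∈ S) (hxy : ∀ i, 0 ≤ s i * (y i - x i)) :
    MvPolynomial.eval x P ≤ MvPolynomial.eval y P := by
  have hmon : MonotoneOn (fun t => (ruLine P x (y - x)).eval t) (Set.Icc 0 1) := by
    apply monotoneOn_of_deriv_nonneg (convex_Icc 0 1)
    · exact (Polynomial.continuous _).continuousOn
    · exact (Polynomial.differentiable _).differentiableOn
    · intro t ht
      rw [interior_Icc] at ht
      rw [Polynomial.deriv, ruLine_derivative, Polynomial.eval_finsetSum]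
      refine Finset.sum_nonneg fun i _ => ?_
      rw [Polynomial.eval_mul, ruLine_eval, Polynomial.eval_C]
      have hz : (fun i => x i + t * (y - x) i) ∈ S := by
        have := hS.add_smul_sub_mem hx hy ⟨ht.1.le, ht.2.le⟩
        exact this
      have h1 := mul_nonneg (hs _ hz i) (hxy i)
      have h2 := hs1 i
      simp only [Pi.sub_apply] at h1 ⊢
      linear_combination h1 + (MvPolynomial.eval (fun i => x i + t * (y i - x i)) (MvPolynomial.pderiv i P)) * (y i - x i) * h2
  have h := hmon (Set.left_mem_Icc.2 zero_le_one) (Set.right_mem_Icc.2 zero_le_one) zero_le_one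
  simp only [ruLine_eval] at h
  simpa using h

/-- Grid cube of side `ε`. -/
def ruCube {N : ℕ} (ε : ℝ) (k : Fin N → ℕ) : Set (Fin N → ℝ) :=
  Set.univ.pi fun i => Set.Icc ((k i : ℝ) * ε) (((k i : ℝ) + 1) * ε)

theorem ruCube_convex {N : ℕ} (ε : ℝ) (k : Fin N → ℕ) : Convex ℝ (ruCube ε k) :=
  convex_pi fun _ _ => convex_Icc _ _

/-- Lowest corner of the cube with respect to the sign pattern `s`. -/
noncomputable def ruLo {N : ℕ} (ε : ℝ) (s : Fin N → ℤˣ) (k : Fin N → ℕ) : Fin N → ℝ :=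
  fun i => ε * (k i + (1 - ((s i : ℤ) : ℝ)) / 2)

/-- Diagonal direction. -/
noncomputable def ruDir {N : ℕ} (ε : ℝ) (s : Fin N → ℤˣ) : Fin N → ℝ :=
  fun i => ε * ((s i : ℤ) : ℝ)

/-- The cube meets the zero set and the partial derivatives have signs `s` on it. -/
def ruGood {N : ℕ} (P : MvPolynomial (Fin N) ℝ) (ε : ℝ) (s : Fin N → ℤˣ) (k : Fin N → ℕ) : Prop :=
  (∃ x ∈ ruCube ε k, MvPolynomial.eval x P = 0) ∧
    ∀ z ∈ ruCube ε k, ∀ i,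
      0 ≤ ((s i : ℤ) : ℝ) * MvPolynomial.eval z (MvPolynomial.pderiv i P)

theorem ru_good_line {N : ℕ} (P : MvPolynomial (Fin N) ℝ) (hP : P ≠ 0) (ε : ℝ) (hε : 0 < ε)
    (s : Fin N → ℤˣ) (k : Fin N → ℕ) (h : ruGood P ε s k) :
    ruLine P (ruLo ε s k) (ruDir ε s) ≠ 0 ∧
      ∃ t ∈ Set.Icc (0 : ℝ) 1, (ruLine P (ruLo ε s k) (ruDir ε s)).eval t = 0 := by
  obtain ⟨⟨x, hx, hx0⟩, hs⟩ := h
  have hs1 : ∀ i, ((s i : ℤ) : ℝ) * ((s i : ℤ) : ℝ) = 1 := by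
    intro i
    rcases Int.units_eq_one_or (s i) with h | h <;> simp [h]
  have hlo : ruLo ε s k ∈ ruCube ε k := by
    intro i _
    rcases Int.units_eq_one_or (s i) with h | h <;> simp [ruLo, h] <;> constructor <;> nlinarith
  have hhi : (fun i => ruLo ε s k i + 1 * ruDir ε s i) ∈ ruCube ε k := by
    intro i _
    rcases Int.units_eq_one_or (s i) with h | h <;> simp [ruLo, ruDir, h] <;> constructor <;> nlinarith
  have hlox : ∀ x ∈ ruCube ε k, MvPolynomial.eval (ruLo ε s k) P ≤ MvPolynomial.eval x P := by
    intro x hx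
    refine ru_mono P _ (ruCube_convex ε k) _ hs hs1 _ _ hlo hx ?_
    intro i
    have := hx i trivial
    simp only [Set.mem_Icc] at this
    rcases Int.units_eq_one_or (s i) with h | h <;> simp [ruLo, h] <;> nlinarith
  have hxhi : ∀ x ∈ ruCube ε k, MvPolynomial.eval x P
      ≤ MvPolynomial.eval (fun i => ruLo ε s k i + 1 * ruDir ε s i) P := by
    intro x hx
    refine ru_mono P _ (ruCube_convex ε k) _ hs hs1 _ _ hx hhi ?_
    intro i
    have := hx i trivial
    simp only [Set.mem_Icc] at this
    rcases Int.units_eq_one_or (s i) with h | h <;> simp [ruLo, ruDir, h] <;> nlinarith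
  have e0 : (ruLine P (ruLo ε s k) (ruDir ε s)).eval 0 = MvPolynomial.eval (ruLo ε s k) P := by
    rw [ruLine_eval]; simp
  have e1 := ruLine_eval P (ruLo ε s k) (ruDir ε s) 1
  constructor
  · intro hQ
    apply hP
    rw [hQ] at e0 e1
    simp only [Polynomial.eval_zero] at e0 e1
    refine MvPolynomial.funext_set
      (fun i => Set.Icc ((k i : ℝ) * ε) (((k i : ℝ) + 1) * ε)) ?_ ?_
    · intro i
      exact Set.Icc_infinite (by nlinarith)
    · intro z hz
      have h1 := hlox z hz
      have h2 := hxhi z hz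
      rw [← e0] at h1
      rw [← e1] at h2
      rw [map_zero]
      exact le_antisymm h2 h1
  · have := intermediate_value_Icc (zero_le_one' ℝ)
      (f := fun t => (ruLine P (ruLo ε s k) (ruDir ε s)).eval t)
      (Polynomial.continuous _).continuousOn
    have h0 : (0 : ℝ) ∈ Set.Icc ((ruLine P (ruLo ε s k) (ruDir ε s)).eval 0)
        ((ruLine P (ruLo ε s k) (ruDir ε s)).eval 1) := by
      rw [e0, e1, ← hx0]
      exact ⟨hlox x hx, hxhi x hx⟩
    obtain ⟨t, ht, ht0⟩ := this h0
    exact ⟨t, ht, ht0⟩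

theorem ru_root_count (Q : Polynomial ℝ) (hQ : Q ≠ 0) (U : Finset ℤ)
    (hU : ∀ u ∈ U, ∃ t ∈ Set.Icc (u : ℝ) (u + 1), Q.eval t = 0) :
    U.card ≤ 2 * Q.natDegree := by
  classical
  have hsub : U ⊆ Q.roots.toFinset.image (fun t => ⌊t⌋)
      ∪ Q.roots.toFinset.image (fun t => ⌊t⌋ - 1) := by
    intro u hu
    obtain ⟨t, ⟨h1, h2⟩, h0⟩ := hU u hu
    have hr : t ∈ Q.roots.toFinset := by
      simp [hQ, h0]
    rw [Finset.mem_union, Finset.mem_image, Finset.mem_image]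
    rcases h2.lt_or_eq with h | h
    · left
      exact ⟨t, hr, Int.floor_eq_iff.2 ⟨h1, h⟩⟩
    · right
      refine ⟨t, hr, ?_⟩
      have : t = ((u + 1 : ℤ) : ℝ) := by push_cast; exact h
      rw [this, Int.floor_intCast]; ring
  have h3 : Q.roots.toFinset.card ≤ Q.natDegree :=
    (Multiset.toFinset_card_le _).trans (Polynomial.card_roots' Q)
  calc U.card ≤ _ := Finset.card_le_card hsub
    _ ≤ _ := Finset.card_union_le _ _
    _ ≤ Q.natDegree + Q.natDegree :=
        add_le_add (Finset.card_image_le.trans h3) (Finset.card_image_le.trans h3)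
    _ = _ := by ring

open Classical in
theorem ru_good_count {m : ℕ} (P : MvPolynomial (Fin (m + 1)) ℝ) (hP : P ≠ 0) (ε : ℝ)
    (hε : 0 < ε) (s : Fin (m + 1) → ℤˣ) (n : ℕ) :
    ((Fintype.piFinset fun _ : Fin (m + 1) => Finset.range n).filter (ruGood P ε s)).card
      ≤ 2 * P.totalDegree * (3 * n) ^ m := by
  set F := (Fintype.piFinset fun _ : Fin (m + 1) => Finset.range n).filter (ruGood P ε s) with hF
  have hmem : ∀ k ∈ F, (∀ i, k i < n) ∧ ruGood P ε s k := by
    intro k hk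
    rw [hF, Finset.mem_filter, Fintype.mem_piFinset] at hk
    exact ⟨fun i => Finset.mem_range.1 (hk.1 i), hk.2⟩
  let f : (Fin (m + 1) → ℕ) → (Fin m → ℤ) :=
    fun k j => (k j.succ : ℤ) - (s j.succ : ℤ) * (s 0 : ℤ) * (k 0 : ℤ)
  have hmaps : ∀ k ∈ F, f k ∈ Fintype.piFinset
      (fun _ : Fin m => Finset.Ico (-(n : ℤ)) (2 * n)) := by
    intro k hk
    rw [Fintype.mem_piFinset]
    intro j
    have h1 := (hmem k hk).1 j.succ
    have h2 := (hmem k hk).1 0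
    rw [Finset.mem_Ico]
    simp only [f]
    rcases Int.units_eq_one_or (s j.succ) with h | h <;>
      rcases Int.units_eq_one_or (s 0) with h' | h' <;> simp [h, h'] <;> omega
  have hfib : ∀ b ∈ Fintype.piFinset
      (fun _ : Fin m => Finset.Ico (-(n : ℤ)) (2 * n)),
      (F.filter fun k => f k = b).card ≤ 2 * P.totalDegree := by
    intro b _
    rcases (F.filter fun k => f k = b).eq_empty_or_nonempty with he | ⟨k, hk⟩
    · simp [he]
    · rw [Finset.mem_filter] at hk
      obtain ⟨hQ, -⟩ := ru_good_line P hP ε hε s k (hmem k hk.1).2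
      let u : (Fin (m + 1) → ℕ) → ℤ := fun k' => (s 0 : ℤ) * ((k' 0 : ℤ) - k 0)
      have hu : ∀ k' ∈ F.filter (fun k => f k = b), ∀ j,
          (k' j : ℤ) = k j + (s j : ℤ) * u k' := by
        intro k' hk' j
        rw [Finset.mem_filter] at hk'
        have h00 : (s 0 : ℤ) * (s 0 : ℤ) = 1 := by
          rcases Int.units_eq_one_or (s 0) with h | h <;> simp [h]
        refine Fin.cases ?_ (fun j => ?_) j
        · simp only [u]
          linear_combination (-(k' 0 : ℤ) + k 0) * h00
        · have := congrFun (hk'.2.trans hk.2.symm) j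
          simp only [f] at this
          simp only [u]
          linear_combination this
      have hinj : Set.InjOn u (F.filter fun k => f k = b : Finset _) := by
        intro k1 h1 k2 h2 h12
        funext j
        have e1 := hu k1 h1 j
        have e2 := hu k2 h2 j
        rw [h12, ← e2] at e1
        exact_mod_cast e1
      rw [← Finset.card_image_of_injOn hinj]
      refine (ru_root_count _ hQ _ ?_).trans
        (Nat.mul_le_mul_left 2 (ruLine_natDegree P _ _))
      intro w hw
      rw [Finset.mem_image] at hw
      obtain ⟨k', hk', rfl⟩ := hw
      obtain ⟨-, t, ht, ht0⟩ := ru_good_line P hP ε hε s k'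
        (hmem k' (Finset.mem_filter.1 hk').1).2
      refine ⟨t + u k', ⟨by linarith [ht.1], by linarith [ht.2]⟩, ?_⟩
      rw [ruLine_eval] at ht0 ⊢
      rw [← ht0]
      congr 2
      funext j
      have e := hu k' hk' j
      have e' : (k' j : ℝ) = k j + ((s j : ℤ) : ℝ) * (u k' : ℝ) := by exact_mod_cast e
      simp only [ruLo, ruDir, e']
      ring
  have := Finset.card_le_mul_card_image_of_maps_to hmaps _ hfib
  refine this.trans ?_
  rw [Fintype.card_piFinset]
  simp only [Int.card_Ico, Finset.prod_const, Finset.card_univ, Fintype.card_fin]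
  have : (2 * (n : ℤ) - -(n : ℤ)).toNat = 3 * n := by omega
  rw [this]

theorem ru_sign {N : ℕ} (R : MvPolynomial (Fin N) ℝ) (S : Set (Fin N → ℝ)) (hS : Convex ℝ S)
    (h : ∀ z ∈ S, R = 0 ∨ MvPolynomial.eval z R ≠ 0) :
    ∃ s : ℤˣ, ∀ z ∈ S, 0 ≤ ((s : ℤ) : ℝ) * MvPolynomial.eval z R := by
  by_contra hcon
  push Not at hcon
  obtain ⟨x, hx, hx1⟩ := hcon 1
  obtain ⟨y, hy, hy1⟩ := hcon (-1)
  simp at hx1 hy1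
  have hc : ContinuousOn (fun z => MvPolynomial.eval z R) S :=
    (MvPolynomial.continuous_eval R).continuousOn
  obtain ⟨z, hz, hz0⟩ := hS.isPreconnected.intermediate_value hx hy hc ⟨hx1.le, hy1.le⟩
  rcases h z hz with h0 | h0
  · rw [h0] at hx1; simp at hx1
  · exact h0 hz0

open Classical in
theorem ru_count (m d : ℕ) : ∃ C : ℕ, ∀ (P : MvPolynomial (Fin (m + 1)) ℝ), P ≠ 0 →
    P.totalDegree < d → ∀ (ε : ℝ), 0 < ε → ∀ n : ℕ,
    ((Fintype.piFinset fun _ : Fin (m + 1) => Finset.range n).filter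
      (fun k => ∃ x ∈ ruCube ε k, MvPolynomial.eval x P = 0)).card ≤ C * n ^ m := by
  induction d with
  | zero => exact ⟨0, fun P _ h => absurd h (Nat.not_lt_zero _)⟩
  | succ d ih =>
    obtain ⟨C, hC⟩ := ih
    refine ⟨(m + 1) * C + 2 ^ (m + 1) * (2 * d * 3 ^ m), ?_⟩
    intro P hP hd ε hε n
    set A := (Fintype.piFinset fun _ : Fin (m + 1) => Finset.range n) with hA
    have hsub : A.filter (fun k => ∃ x ∈ ruCube ε k, MvPolynomial.eval x P = 0) ⊆
        (Finset.univ.biUnion fun i : Fin (m + 1) => A.filter (fun k =>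
          MvPolynomial.pderiv i P ≠ 0 ∧ ∃ x ∈ ruCube ε k,
            MvPolynomial.eval x (MvPolynomial.pderiv i P) = 0)) ∪
        (Finset.univ.biUnion fun s : Fin (m + 1) → ℤˣ => A.filter (ruGood P ε s)) := by
      intro k hk
      rw [Finset.mem_filter] at hk
      by_cases hb : ∃ i, MvPolynomial.pderiv i P ≠ 0 ∧ ∃ x ∈ ruCube ε k,
            MvPolynomial.eval x (MvPolynomial.pderiv i P) = 0
      · obtain ⟨i, hi⟩ := hb
        apply Finset.mem_union_left
        rw [Finset.mem_biUnion]
        exact ⟨i, Finset.mem_univ _, Finset.mem_filter.2 ⟨hk.1, hi⟩⟩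
      · apply Finset.mem_union_right
        push Not at hb
        have : ∀ i, ∃ s : ℤˣ, ∀ z ∈ ruCube ε k,
            0 ≤ ((s : ℤ) : ℝ) * MvPolynomial.eval z (MvPolynomial.pderiv i P) := by
          intro i
          refine ru_sign _ _ (ruCube_convex ε k) ?_
          intro z hz
          by_cases h0 : MvPolynomial.pderiv i P = 0
          · exact Or.inl h0
          · exact Or.inr (hb i h0 z hz)
        choose s hs using this
        rw [Finset.mem_biUnion]
        exact ⟨s, Finset.mem_univ _, Finset.mem_filter.2 ⟨hk.1, hk.2, fun z hz i => hs i z hz⟩⟩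
    refine (Finset.card_le_card hsub).trans ((Finset.card_union_le _ _).trans ?_)
    rw [add_mul]
    refine add_le_add ?_ ?_
    · refine (Finset.card_biUnion_le_card_mul _ _ (C * n ^ m) ?_).trans ?_
      · intro i _
        by_cases h0 : MvPolynomial.pderiv i P = 0
        · simp [h0]
        · simpa [h0] using hC _ h0 (ru_totalDegree_pderiv P i d hd h0) ε hε n
      · simp [mul_assoc]
    · refine (Finset.card_biUnion_le_card_mul _ _ (2 * d * (3 * n) ^ m) ?_).trans ?_
      · intro s _
        refine (ru_good_count P hP ε hε s n).trans ?_
        gcongr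
        omega
      · simp [mul_pow, mul_assoc]

theorem ru_smallCube_eq (ℓ : ℕ) (r : ℚ) (n : ℕ) (k : Fin ℓ → ℕ) :
    smallCube ℓ r n k = ruCube ((r : ℝ) / n) k := by
  simp only [smallCube, ruCube, mul_div_assoc]

theorem ru_cube_volume {N : ℕ} (ε : ℝ) (k : Fin N → ℕ) :
    MeasureTheory.volume (ruCube ε k) = ENNReal.ofReal ε ^ N := by
  rw [ruCube, Set.pi_univ_Icc, Real.volume_Icc_pi]
  simp [add_mul]

theorem ru_exists_cube (r : ℝ) (hr : 0 < r) (n : ℕ) (hn : 1 ≤ n) (x : ℝ)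
    (hx : x ∈ Set.Icc 0 r) :
    ∃ k : ℕ, k < n ∧ x ∈ Set.Icc ((k : ℝ) * (r / n)) (((k : ℝ) + 1) * (r / n)) := by
  have hn' : (0 : ℝ) < n := by exact_mod_cast hn
  have he : 0 < r / n := div_pos hr hn'
  have hre : (n : ℝ) * (r / n) = r := by field_simp
  rcases hx.2.lt_or_eq with h | h
  · refine ⟨⌊x / (r / n)⌋₊, ?_, ?_, ?_⟩
    · rw [Nat.floor_lt (div_nonneg hx.1 he.le), div_lt_iff₀ he, hre]
      exact h
    · rw [← le_div_iff₀ he]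
      exact Nat.floor_le (div_nonneg hx.1 he.le)
    · rw [← div_le_iff₀ he]
      exact (Nat.lt_floor_add_one _).le
  · refine ⟨n - 1, by omega, ?_⟩
    rw [Nat.cast_sub hn]
    push_cast
    constructor <;> nlinarith

theorem ru_union_subset (ℓ : ℕ) (r : ℚ) (D : Set (Fin ℓ → ℝ)) (n : ℕ) :
    riemannUnion ℓ r D n ⊆ D := by
  intro x hx
  simp only [riemannUnion, Set.mem_iUnion] at hx
  obtain ⟨k, hk, hx⟩ := hx
  exact hk.2 hx

theorem ru_aeval {ℓ : ℕ} (G : MvPolynomial (Fin ℓ) ℤ) (x : Fin ℓ → ℝ) :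
    MvPolynomial.aeval x G = MvPolynomial.eval x (MvPolynomial.map (Int.castRingHom ℝ) G) := by
  rw [MvPolynomial.eval_map, MvPolynomial.aeval_def]
  rfl

open Classical in
/-- Volume bound: `vol D ≤ vol V_n + (q C n^m) (r/n)^(m+1)`. -/
theorem ru_volume_bound (m q : ℕ) (r : ℚ) (hr : 0 < r)
    (G : Fin q → MvPolynomial (Fin (m + 1)) ℤ)
    (D : Set (Fin (m + 1) → ℝ))
    (hD : D = {x | ∀ i, 0 < MvPolynomial.aeval x (G i)})
    (hne : D.Nonempty)
    (hsub : D ⊆ Set.univ.pi fun _ => Set.Icc (0 : ℝ) (r : ℝ)) :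
    ∃ C : ℕ, ∀ n : ℕ, 1 ≤ n → MeasureTheory.volume D ≤
      MeasureTheory.volume (riemannUnion (m + 1) r D n)
        + (C * n ^ m : ℕ) * ENNReal.ofReal ((r : ℝ) / n) ^ (m + 1) := by
  set P : Fin q → MvPolynomial (Fin (m + 1)) ℝ :=
    fun i => MvPolynomial.map (Int.castRingHom ℝ) (G i) with hPdef
  have hDP : ∀ x, x ∈ D ↔ ∀ i, 0 < MvPolynomial.eval x (P i) := by
    intro x
    rw [hD]
    simp only [Set.mem_setOf_eq, ru_aeval, hPdef]
  have hP0 : ∀ i, P i ≠ 0 := by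
    intro i h0
    obtain ⟨x, hx⟩ := hne
    have := (hDP x).1 hx i
    rw [h0] at this
    simp at this
  have hr' : (0 : ℝ) < r := by exact_mod_cast hr
  obtain ⟨C, hC⟩ := ru_count m ((Finset.univ.sup fun i => (P i).totalDegree) + 1)
  refine ⟨q * C, fun n hn => ?_⟩
  have hn' : (0 : ℝ) < n := by exact_mod_cast hn
  have he : 0 < (r : ℝ) / n := div_pos hr' hn'
  set B : Finset (Fin (m + 1) → ℕ) := Finset.univ.biUnion fun i : Fin q =>
    (Fintype.piFinset fun _ : Fin (m + 1) => Finset.range n).filter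
      (fun k => ∃ x ∈ ruCube ((r : ℝ) / n) k, MvPolynomial.eval x (P i) = 0) with hB
  have hBc : B.card ≤ q * C * n ^ m := by
    refine (Finset.card_biUnion_le_card_mul _ _ (C * n ^ m) ?_).trans ?_
    · intro i _
      refine hC _ (hP0 i) ?_ _ he n
      exact Nat.lt_succ_of_le (Finset.le_sup (f := fun i => (P i).totalDegree) (Finset.mem_univ i))
    · simp [mul_assoc]
  have hcov : D ⊆ riemannUnion (m + 1) r D n ∪ ⋃ k ∈ B, ruCube ((r : ℝ) / n) k := by
    intro x hx
    have hxr := hsub hx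
    choose k hkn hkx using fun i => ru_exists_cube r hr' n hn (x i) (hxr i trivial)
    have hxk : x ∈ ruCube ((r : ℝ) / n) k := fun i _ => hkx i
    by_cases hk : ruCube ((r : ℝ) / n) k ⊆ D
    · left
      simp only [riemannUnion, Set.mem_iUnion]
      refine ⟨k, ⟨hkn, ?_⟩, ?_⟩ <;> rw [ru_smallCube_eq]
      · exact hk
      · exact hxk
    · right
      rw [Set.not_subset] at hk
      obtain ⟨y, hyk, hyD⟩ := hk
      rw [hDP] at hyD
      push Not at hyD
      obtain ⟨i, hi⟩ := hyD
      have hxi := (hDP x).1 hx i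
      obtain ⟨z, hz, hz0⟩ := (ruCube_convex ((r : ℝ) / n) k).isPreconnected.intermediate_value
        hyk hxk (f := fun z => MvPolynomial.eval z (P i))
        (MvPolynomial.continuous_eval _).continuousOn ⟨hi, hxi.le⟩
      simp only [Set.mem_iUnion]
      refine ⟨k, ?_, hxk⟩
      rw [hB, Finset.mem_biUnion]
      refine ⟨i, Finset.mem_univ _, Finset.mem_filter.2 ⟨?_, z, hz, hz0⟩⟩
      rw [Fintype.mem_piFinset]
      exact fun j => Finset.mem_range.2 (hkn j)
  refine (MeasureTheory.measure_mono hcov).trans ((MeasureTheory.measure_union_le _ _).trans ?_)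
  refine add_le_add le_rfl ?_
  refine (MeasureTheory.measure_biUnion_finset_le _ _).trans ?_
  simp only [ru_cube_volume, Finset.sum_const, nsmul_eq_mul]
  gcongr

/-- For a bounded basic open semialgebraic set `D ⊆ [0,r]^ℓ`
defined by integer-coefficient polynomials, there is a constant `L > 0`
(depending only on `D`) such that whenever `4·r·L·√ℓ·k < n` (with `k, n ≥ 1`),
`|vol(D) − vol(V_n)| < 1/k`. -/
theorem riemannUnion_volume_convergence
    (ℓ q : ℕ) (r : ℚ) (hr : 0 < r)
    (G : Fin q → MvPolynomial (Fin ℓ) ℤ)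
    (D : Set (Fin ℓ → ℝ))
    (hD : D = {x : Fin ℓ → ℝ | ∀ i, 0 < MvPolynomial.aeval x (G i)})
    (hsub : D ⊆ Set.univ.pi fun _ => Set.Icc (0 : ℝ) (r : ℝ)) :
    ∃ L : ℝ, 0 < L ∧
      ∀ k n : ℕ, 1 ≤ k → 1 ≤ n →
        4 * (r : ℝ) * L * Real.sqrt ℓ * k < n →
        |(MeasureTheory.volume D).toReal
          - (MeasureTheory.volume (riemannUnion ℓ r D n)).toReal| < 1 / k := by
  rcases D.eq_empty_or_nonempty with he | hne
  · refine ⟨1, one_pos, fun k n hk hn _ => ?_⟩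
    have h1 : riemannUnion ℓ r D n = ∅ :=
      Set.subset_empty_iff.1 ((ru_union_subset ℓ r D n).trans he.subset)
    rw [h1, he]
    have : (0 : ℝ) < k := by exact_mod_cast hk
    simpa using this
  cases ℓ with
  | zero =>
    refine ⟨1, one_pos, fun k n hk hn _ => ?_⟩
    have h1 : riemannUnion 0 r D n = D := by
      refine (ru_union_subset 0 r D n).antisymm ?_
      intro x hx
      simp only [riemannUnion, Set.mem_iUnion]
      refine ⟨fun _ => 0, ⟨fun i => i.elim0, ?_⟩, fun i => i.elim0⟩
      intro y _
      rwa [Subsingleton.elim y x]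
    rw [h1]
    have : (0 : ℝ) < k := by exact_mod_cast hk
    simpa using this
  | succ m =>
    obtain ⟨C, hC⟩ := ru_volume_bound m q r hr G D hD hne hsub
    have hr' : (0 : ℝ) < r := by exact_mod_cast hr
    set K : ℝ := C * (r : ℝ) ^ (m + 1) with hK
    have hK0 : 0 ≤ K := by positivity
    refine ⟨(K + 1) / (4 * r), by positivity, fun k n hk hn hkn => ?_⟩
    have hk' : (0 : ℝ) < k := by exact_mod_cast hk
    have hn' : (0 : ℝ) < n := by exact_mod_cast hn
    have hDfin : MeasureTheory.volume D ≠ ⊤ := by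
      refine ne_top_of_le_ne_top ?_ (MeasureTheory.measure_mono hsub)
      rw [Set.pi_univ_Icc, Real.volume_Icc_pi]
      simp [ENNReal.prod_ne_top]
    have hVle := MeasureTheory.measure_mono (μ := MeasureTheory.volume)
      (ru_union_subset (m + 1) r D n)
    have hVfin := ne_top_of_le_ne_top hDfin hVle
    have h1 := ENNReal.toReal_mono hDfin hVle
    have h2 := hC n hn
    have hfin2 : ((C * n ^ m : ℕ) : ENNReal) * ENNReal.ofReal ((r : ℝ) / n) ^ (m + 1) ≠ ⊤ :=
      ENNReal.mul_ne_top (ENNReal.natCast_ne_top _) (ENNReal.pow_ne_top ENNReal.ofReal_ne_top)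
    have h3 := ENNReal.toReal_mono (ENNReal.add_ne_top.2 ⟨hVfin, hfin2⟩) h2
    rw [ENNReal.toReal_add hVfin hfin2, ENNReal.toReal_mul, ENNReal.toReal_pow,
      ENNReal.toReal_natCast, ENNReal.toReal_ofReal (by positivity)] at h3
    have h4 : ((C * n ^ m : ℕ) : ℝ) * ((r : ℝ) / n) ^ (m + 1) = K / n := by
      rw [hK, div_pow]
      push_cast
      field_simp
      ring
    rw [h4] at h3
    rw [abs_of_nonneg (sub_nonneg.2 h1)]
    have hs : 1 ≤ Real.sqrt ((m + 1 : ℕ) : ℝ) := by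
      rw [Real.one_le_sqrt]
      push_cast
      linarith [Nat.cast_nonneg (α := ℝ) m]
    have h5 : 4 * (r : ℝ) * ((K + 1) / (4 * r)) = K + 1 := by field_simp
    rw [h5] at hkn
    have h6 : (K + 1) * k < n := by
      refine lt_of_le_of_lt ?_ hkn
      have : (K + 1) * 1 ≤ (K + 1) * Real.sqrt ((m + 1 : ℕ) : ℝ) := by gcongr
      nlinarith
    have h7 : K / n < 1 / k := by
      rw [div_lt_div_iff₀ hn' hk']
      linarith
    linarith
end
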